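/- arXiv:1310.2858 — 2 statements merged into one kernel-verified Lean document; each statement's English description precedes it below -/
import Mathlib

section
/- Let c̄ be a k-cd for n nodes (n ≥ 1) with M(c̄) = {m} for some m ∈ [k], and let j ∈ [k] ∖ {m}. Then the variance of C_{m,t+1} − C_{j,t+1} conditioned on C_t = c̄ is at most 3·c_m. -/
open Finset

/-- The color appearing at least twice among `x, y, z`, or `x` if all three are distinct. -/
def maj3 {k : ℕ} (x y z : Fin k) : Fin k := if y = z then y else x

/-- Number of nodes with color `j` in the assignment `a`. -/
def cnt {n k : ℕ} (a : Fin n → Fin k) (j : Fin k) : ℕ :=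
  (Finset.univ.filter (fun i => a i = j)).card

/-- One sample for a round of the 3-majority dynamics: each node picks three nodes
(uniformly at random, with replacement). -/
abbrev Sample (n : ℕ) := Fin n → Fin n × Fin n × Fin n

/-- The assignment obtained from `a` after one step of the 3-majority dynamics with samples `S`. -/
def stepA {n k : ℕ} (a : Fin n → Fin k) (S : Sample n) : Fin n → Fin k :=
  fun i => maj3 (a (S i).1) (a (S i).2.1) (a (S i).2.2)

/-- Probability that the event `E` holds for the configuration obtained from `a`
after one step of the 3-majority dynamics (samples are uniform and independent). -/
noncomputable def stepPr {n k : ℕ} (a : Fin n → Fin k) (E : (Fin n → Fin k) → Prop) : ℝ :=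
  (Nat.card {S : Sample n // E (stepA a S)} : ℝ) / (Nat.card (Sample n) : ℝ)

/-- Expectation of `f` of the configuration obtained from `a` after one step of the
3-majority dynamics. -/
noncomputable def stepE {n k : ℕ} (a : Fin n → Fin k) (f : (Fin n → Fin k) → ℝ) : ℝ :=
  (∑ S : Sample n, f (stepA a S)) / (Nat.card (Sample n) : ℝ)

/-- `m(c̄)`: the size of the largest color class. -/
def mval {k : ℕ} (c : Fin k → ℕ) : ℕ := Finset.univ.sup c

/-- `M(c̄)`: the set of colors attaining the maximum. -/
def Mset {k : ℕ} (c : Fin k → ℕ) : Finset (Fin k) :=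
  Finset.univ.filter (fun j => c j = mval c)

/-- `s(c̄)`: the bias, i.e. the gap between the (unique) maximum and the second largest
color class; `0` if the maximum is not unique. -/
def sval {k : ℕ} (c : Fin k → ℕ) : ℕ :=
  if (Mset c).card = 1 then mval c - (Finset.univ \ Mset c).sup c else 0

/-- `α(c̄) = (n − m(c̄))·s(c̄)/n²`. -/
noncomputable def alphaV (n : ℕ) {k : ℕ} (c : Fin k → ℕ) : ℝ :=
  ((n : ℝ) - mval c) * sval c / (n : ℝ) ^ 2

/-- `γ(c̄) = (n·m(c̄) − Σ_h c_h²)/n² − α(c̄)`. -/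
noncomputable def gammaV (n : ℕ) {k : ℕ} (c : Fin k → ℕ) : ℝ :=
  ((n : ℝ) * mval c - ∑ h, (c h : ℝ) ^ 2) / (n : ℝ) ^ 2 - alphaV n c

/-- The trajectory of the 3-majority dynamics started at `a`, driven by the samples `S`
for the first `N` rounds. -/
def trajA {n k N : ℕ} (a : Fin n → Fin k) (S : Fin N → Sample n) : ℕ → Fin n → Fin k
  | 0 => a
  | t + 1 => if h : t < N then stepA (trajA a S t) (S ⟨t, h⟩) else trajA a S t

/-- Probability of an event `E` for an `N`-round run of the 3-majority dynamics
(all samples of all rounds are uniform and independent). -/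
noncomputable def runPr {n k : ℕ} (N : ℕ) (a : Fin n → Fin k)
    (E : (Fin N → Sample n) → Prop) : ℝ :=
  (Nat.card {S : Fin N → Sample n // E S} : ℝ) / (Nat.card (Fin N → Sample n) : ℝ)

lemma sumcons {T : Type*} [Fintype T] (m : ℕ) (F : (Fin (m+1) → T) → ℝ) :
    ∑ S, F S = ∑ t, ∑ S' : Fin m → T, F (Fin.cons t S') := by
  rw [← Fintype.sum_prod_type']
  exact (Fintype.sum_equiv (Fin.consEquiv (fun _ => T)) _ _ (fun x => rfl)).symm

lemma sumA {T : Type*} [Fintype T] (h : T → ℝ) (h0 : ∑ t, h t = 0) (m : ℕ) :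
    ∑ S : Fin m → T, ∑ i, h (S i) = 0 := by
  induction m with
  | zero => simp
  | succ m ih =>
    rw [sumcons]
    simp only [Fin.sum_univ_succ, Fin.cons_zero, Fin.cons_succ, Finset.sum_add_distrib, ih]
    simp [← Finset.mul_sum, h0]

lemma sumV {T : Type*} [Fintype T] (h : T → ℝ) (h0 : ∑ t, h t = 0) (m : ℕ) :
    (Fintype.card T : ℝ) * ∑ S : Fin m → T, (∑ i, h (S i)) ^ 2
      = m * (Fintype.card T : ℝ) ^ m * ∑ t, h t ^ 2 := by
  induction m with
  | zero => simp
  | succ m ih =>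
    rw [sumcons]
    simp only [Fin.sum_univ_succ, Fin.cons_zero, Fin.cons_succ, add_sq,
      Finset.sum_add_distrib, ← Finset.mul_sum, sumA h h0]
    simp only [Finset.sum_const, Finset.card_univ, nsmul_eq_mul, mul_zero, Fintype.card_fun,
      Fintype.card_fin, ← Finset.mul_sum, ih, add_zero]
    push_cast
    ring

/-- Variance of a sum of independent uniform draws. -/
lemma var_le {T : Type*} [Fintype T] [Nonempty T] (g : T → ℝ) (m : ℕ) (B : ℝ)
    (hB : ∑ t, g t ^ 2 ≤ B * Fintype.card T) :
    (∑ S : Fin m → T, (∑ i, g (S i) -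
      (∑ S : Fin m → T, ∑ i, g (S i)) / (Fintype.card T : ℝ) ^ m) ^ 2)
      / (Fintype.card T : ℝ) ^ m ≤ m * B := by
  set N : ℝ := (Fintype.card T : ℝ) with hN
  have hNpos : 0 < N := by simp [hN, Fintype.card_pos]
  set μ : ℝ := (∑ t, g t) / N with hμ
  have hs : ∑ t, g t = N * μ := by rw [hμ]; field_simp
  have h0 : ∑ t, (g t - μ) = 0 := by
    simp [Finset.sum_sub_distrib, hs, ← hN]
  have hmean : (∑ S : Fin m → T, ∑ i, g (S i)) / N ^ m = m * μ := by
    have := sumA _ h0 m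
    simp only [Finset.sum_sub_distrib] at this
    simp only [Finset.sum_const, Finset.card_univ, nsmul_eq_mul, Fintype.card_fun,
      Fintype.card_fin] at this
    push_cast at this
    rw [← hN] at this
    rw [div_eq_iff (by positivity)]
    linarith
  rw [hmean]
  have hV := sumV _ h0 m
  simp only [Finset.sum_sub_distrib] at hV
  simp only [Finset.sum_const, Finset.card_univ, nsmul_eq_mul, Fintype.card_fin] at hV
  rw [← hN] at hV
  have hq : ∑ t, (g t - μ) ^ 2 ≤ B * N := by
    have : ∑ t, (g t - μ) ^ 2 = ∑ t, g t ^ 2 - N * μ ^ 2 := by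
      simp only [sub_sq, Finset.sum_add_distrib, Finset.sum_sub_distrib, ← Finset.sum_mul,
        ← Finset.mul_sum, hs, Finset.sum_const, Finset.card_univ, nsmul_eq_mul, ← hN]
      ring
    nlinarith [mul_nonneg hNpos.le (sq_nonneg μ)]
  rw [div_le_iff₀ (by positivity)]
  refine le_of_mul_le_mul_left ?_ hNpos
  rw [hV]
  calc _ ≤ m * N ^ m * (B * N) := by gcongr
    _ = _ := by ring

lemma cnt_real {n k : ℕ} (b : Fin n → Fin k) (h : Fin k) :
    (cnt b h : ℝ) = ∑ i, (if b i = h then (1:ℝ) else 0) := by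
  simp [cnt]

lemma col_le {n k : ℕ} (hn : 1 ≤ n) (a : Fin n → Fin k) (h : Fin k) :
    ∑ t : Fin n × Fin n × Fin n, (if maj3 (a t.1) (a t.2.1) (a t.2.2) = h then (1:ℝ) else 0)
      ≤ 3 / 2 * cnt a h * (n:ℝ) ^ 2 := by
  set I : Fin n → ℝ := fun i => if a i = h then (1:ℝ) else 0 with hI
  have hc : (cnt a h : ℝ) = ∑ i, I i := cnt_real a h
  have hle : ∀ t : Fin n × Fin n × Fin n,
      (if maj3 (a t.1) (a t.2.1) (a t.2.2) = h then (1:ℝ) else 0)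
        ≤ I t.2.1 * I t.2.2 + I t.1 - I t.1 * (I t.2.1 * I t.2.2) := by
    rintro ⟨x, y, z⟩
    simp only [maj3, hI]
    split_ifs <;> simp_all
  refine (Finset.sum_le_sum (fun t _ => hle t)).trans ?_
  simp only [Fintype.sum_prod_type, Finset.sum_add_distrib, Finset.sum_sub_distrib,
    ← Finset.mul_sum, ← Finset.sum_mul, ← hc, Finset.sum_const, Finset.card_univ, nsmul_eq_mul,
    Fintype.card_fin]
  simp only [Fintype.card_prod, Fintype.card_fin, Nat.cast_mul]
  have c0 : (0:ℝ) ≤ cnt a h := by positivity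
  nlinarith [mul_nonneg c0 (sq_nonneg ((cnt a h : ℝ) - n/2)), mul_nonneg c0 (sq_nonneg (n:ℝ))]

/-- If `M(c̄) = {m}` and `j ≠ m`, the variance of `C_{m,t+1} − C_{j,t+1}` conditioned on
`C_t = c̄` is at most `3·c_m`. -/
theorem variance_gap_le (n k : ℕ) (hn : 1 ≤ n) (c : Fin k → ℕ) (hc : ∑ h, c h = n)
    (a : Fin n → Fin k) (ha : ∀ h, cnt a h = c h) (m : Fin k) (hM : Mset c = {m})
    (j : Fin k) (hj : j ≠ m) :
    stepE a (fun b =>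
        ((cnt b m : ℝ) - (cnt b j : ℝ) -
          stepE a (fun b' => (cnt b' m : ℝ) - (cnt b' j : ℝ))) ^ 2) ≤ 3 * (c m : ℝ) := by
  have hcm : c m = mval c := by
    have : m ∈ Mset c := by rw [hM]; simp
    simpa [Mset] using this
  have hjm : c j ≤ c m := by
    rw [hcm]; exact Finset.le_sup (f := c) (Finset.mem_univ j)
  haveI : NeZero n := ⟨by omega⟩
  have hn0 : (0:ℝ) < n := by exact_mod_cast hn
  set f : Fin k → Fin n × Fin n × Fin n → ℝ := fun h t =>
    if maj3 (a t.1) (a t.2.1) (a t.2.2) = h then (1:ℝ) else 0 with hf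
  have key : ∀ S : Sample n, (cnt (stepA a S) m : ℝ) - cnt (stepA a S) j
      = ∑ i, (f m (S i) - f j (S i)) := by
    intro S
    rw [cnt_real, cnt_real, ← Finset.sum_sub_distrib]
    rfl
  have hB : ∑ t, (f m t - f j t) ^ 2
      ≤ (3 * c m / n) * Fintype.card (Fin n × Fin n × Fin n) := by
    have h1 := col_le hn a m
    have h2 := col_le hn a j
    rw [ha] at h1 h2
    have h3 : ∑ t, (f m t - f j t) ^ 2 ≤ ∑ t, (f m t + f j t) := by
      refine Finset.sum_le_sum (fun t _ => ?_)
      simp only [hf]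
      split_ifs <;> norm_num
    rw [Finset.sum_add_distrib] at h3
    have h4 : (c j : ℝ) * (n:ℝ)^2 ≤ c m * (n:ℝ)^2 := by
      have : (c j : ℝ) ≤ c m := by exact_mod_cast hjm
      gcongr
    have h5 : (3 * c m / n : ℝ) * Fintype.card (Fin n × Fin n × Fin n) = 3 * c m * (n:ℝ)^2 := by
      simp only [Fintype.card_prod, Fintype.card_fin]
      push_cast
      field_simp
    rw [h5]
    linarith
  have := var_le (fun t => f m t - f j t) n _ hB
  have hcard : (Nat.card (Sample n) : ℝ) = (Fintype.card (Fin n × Fin n × Fin n) : ℝ) ^ n := by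
    rw [Nat.card_eq_fintype_card, Fintype.card_fun, Fintype.card_fin]
    push_cast
    rfl
  simp only [stepE, key, hcard]
  refine this.trans (le_of_eq ?_)
  field_simp
end

section
/- (Large majority and large bias, first bound.) Let c̄ be a k-cd for n nodes with M(c̄) = {m} for some m ∈ [k], and let λ be a value with 0 < λ ≤ 2/3. If λ·n ≤ c_m ≤ (2/3)·n and s(c̄) ≥ 22·√((1/λ)·n·log n), then for every j ∈ [k] ∖ {m}, Pr[ C_{m,t+1} − C_{j,t+1} ≤ s(c̄)·(1 + λ/6) | C_t = c̄ ] ≤ 1/n². -/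
open Finset

lemma exp_neg_bd {θ : ℝ} (h0 : 0 ≤ θ) (h1 : θ ≤ 1/27) :
    Real.exp (-θ) - 1 ≤ -θ + 0.6 * θ ^ 2 := by
  have h := Real.exp_bound (x := -θ) (by rw [abs_neg, abs_of_nonneg h0]; linarith) (n := 3) (by norm_num)
  rw [abs_le] at h
  have h2 := h.2
  rw [abs_neg, abs_of_nonneg h0] at h2
  norm_num [Finset.sum_range_succ, Nat.factorial] at h2
  nlinarith [mul_nonneg (sq_nonneg θ) (sub_nonneg.2 h1)]

lemma exp_pos_bd {θ : ℝ} (h0 : 0 ≤ θ) (h1 : θ ≤ 1/27) :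
    Real.exp θ - 1 ≤ θ + 0.6 * θ ^ 2 := by
  have h := Real.exp_bound (x := θ) (by rw [abs_of_nonneg h0]; linarith) (n := 3) (by norm_num)
  rw [abs_le] at h
  have h2 := h.2
  rw [abs_of_nonneg h0] at h2
  norm_num [Finset.sum_range_succ, Nat.factorial] at h2
  nlinarith [mul_nonneg (sq_nonneg θ) (sub_nonneg.2 h1)]

/-- mean drift -/
lemma drift_bd {p q S σ : ℝ} (hq : 0 ≤ q) (hσ0 : 0 ≤ σ) (hσ : σ ≤ p - q) (hp : p ≤ 2/3)
    (hS : S ≤ p ^ 2 + (1 - p) * (p - σ)) :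
    σ * (1 + p / 3) ≤ p * (1 + p - S) - q * (1 + q - S) := by
  have e : p * (1 + p - S) - q * (1 + q - S) = (p - q) * (1 + p + q - S) := by ring
  have hp0 : 0 ≤ p := by linarith
  rw [e]
  have h1 : p + (1 - p) * σ - p ≤ p - S := by nlinarith
  -- (p-q)(1+p+q-S) is decreasing in q for q up to p - σ
  have hS1 : S ≤ 1 := by nlinarith
  have h2 : σ * (1 + p + (p - σ) - S) ≤ (p - q) * (1 + p + q - S) := by
    have : (p - q) * (1 + p + q - S) - σ * (1 + p + (p - σ) - S)
      = (p - q - σ) * (1 - S + q + (p - σ)) := by ring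
    have : 0 ≤ (p - q - σ) * (1 - S + q + (p - σ)) :=
      mul_nonneg (by linarith) (by linarith)
    linarith
  have h3 : 1 + p / 3 ≤ 1 + p + (p - σ) - S := by nlinarith
  exact le_trans (mul_le_mul_of_nonneg_left h3 hσ0) h2

lemma expo_bd {N p q S σ lam : ℝ} (hN : 1 ≤ N) (hq : 0 ≤ q) (hσ0 : 0 ≤ σ) (hσ : σ ≤ p - q)
    (hp : p ≤ 2/3) (hS : S ≤ p ^ 2 + (1 - p) * (p - σ)) (hS2 : p ^ 2 ≤ S)
    (hl : 0 < lam) (hlp : lam ≤ p)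
    (hs : 484 * (1 / lam * N * Real.log N) ≤ (σ * N) ^ 2) :
    N * (p * (1 + p - S) * (Real.exp (-(σ / 18)) - 1) + q * (1 + q - S) * (Real.exp (σ / 18) - 1))
      + σ / 18 * (σ * N * (1 + lam / 6)) ≤ -2 * Real.log N := by
  have hp0 : 0 ≤ p := by linarith
  have hS1 : S ≤ 1 := by nlinarith
  have d := drift_bd hq hσ0 hσ hp hS
  have hθ0 : 0 ≤ σ / 18 := by linarith
  have hθ1 : σ / 18 ≤ 1/27 := by linarith
  have e1 := exp_neg_bd hθ0 hθ1
  have e2 := exp_pos_bd hθ0 hθ1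
  set u := p * (1 + p - S) with hu
  set v := q * (1 + q - S) with hv
  have hu0 : 0 ≤ u := mul_nonneg hp0 (by linarith)
  have hv0 : 0 ≤ v := mul_nonneg hq (by linarith)
  have huv : v ≤ u := by
    have : 0 ≤ σ * (1 + p / 3) := by positivity
    linarith
  have hu1 : u ≤ 1.25 * p := by
    have : 1 + p - S ≤ 1.25 := by nlinarith [sq_nonneg (p - 1/2)]
    nlinarith
  have m1 := mul_le_mul_of_nonneg_left e1 hu0
  have m2 := mul_le_mul_of_nonneg_left e2 hv0
  set θ := σ / 18 with hθ
  have hσθ : σ = 18 * θ := by rw [hθ]; ring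
  have m3 : u * (Real.exp (-θ) - 1) + v * (Real.exp θ - 1) ≤ -θ * (σ * (1 + p / 3)) + 1.5 * p * θ ^ 2 := by
    have : θ * (σ * (1 + p / 3)) ≤ θ * (u - v) := mul_le_mul_of_nonneg_left d hθ0
    have h4 : (u + v) * θ ^ 2 ≤ 2.5 * p * θ ^ 2 := mul_le_mul_of_nonneg_right (by linarith) (sq_nonneg _)
    linarith
  have m4 : u * (Real.exp (-θ) - 1) + v * (Real.exp θ - 1) + θ * (σ * (1 + lam / 6))
      ≤ - (σ ^ 2 * p / 216) := by
    have : θ * (σ * (1 + lam / 6)) ≤ θ * (σ * (1 + p / 6)) := by gcongr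
    have e3 : -θ * (σ * (1 + p / 3)) + 1.5 * p * θ ^ 2 + θ * (σ * (1 + p / 6))
      = - (σ ^ 2 * p / 216) := by rw [hθ]; ring
    linarith
  have hL : 0 ≤ Real.log N := Real.log_nonneg hN
  have m5 : 484 * Real.log N ≤ σ ^ 2 * p * N := by
    have h6 : 484 * Real.log N * N ≤ (σ ^ 2 * lam * N) * N := by
      have := mul_le_mul_of_nonneg_left hs hl.le
      have e : lam * (484 * (1 / lam * N * Real.log N)) = 484 * Real.log N * N := by
        field_simp
      have e' : lam * (σ * N) ^ 2 = (σ ^ 2 * lam * N) * N := by ring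
      linarith
    have h7 := le_of_mul_le_mul_right h6 (by linarith)
    have : σ ^ 2 * lam * N ≤ σ ^ 2 * p * N := by gcongr
    linarith
  have m6 := mul_le_mul_of_nonneg_left m4 (by linarith : 0 ≤ N)
  linarith

lemma sum_ind {n k : ℕ} (a : Fin n → Fin k) (h : Fin k) :
    ∑ i, (if a i = h then (1:ℝ) else 0) = cnt a h := by
  simp [cnt]

lemma ind_maj {k : ℕ} (x y z h : Fin k) :
    (if maj3 x y z = h then (1:ℝ) else 0) =
      (if y = h then 1 else 0) * (if z = h then 1 else 0) +
      (if x = h then 1 else 0) * (1 - ∑ g, (if y = g then (1:ℝ) else 0) * (if z = g then 1 else 0)) := by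
  have : ∑ g, (if y = g then (1:ℝ) else 0) * (if z = g then 1 else 0) = if y = z then 1 else 0 := by
    simp [eq_comm]
  rw [this, maj3]
  by_cases h1 : y = z
  · subst h1; by_cases h2 : y = h <;> simp [h2]
  · by_cases h2 : y = h
    · subst h2; simp [h1, Ne.symm h1]
    · simp [h1, h2]

lemma sum_gen {n : ℕ} (A : Fin n → ℝ) (B : Fin n → Fin n → ℝ) :
    ∑ x, ∑ y, ∑ z, (A y * A z + A x * (1 - B y z))
      = (∑ x, A x) ^ 2 * n + (∑ x, A x) * ((n:ℝ) ^ 2 - ∑ y, ∑ z, B y z) := by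
  have h1 : ∀ x y, ∑ z, (A y * A z + A x * (1 - B y z))
      = A y * (∑ z, A z) + A x * (n - ∑ z, B y z) := by
    intro x y
    rw [Finset.sum_add_distrib, ← Finset.mul_sum, ← Finset.mul_sum, Finset.sum_sub_distrib]
    simp
  have h2 : ∀ x, ∑ y, ∑ z, (A y * A z + A x * (1 - B y z))
      = (∑ z, A z) * (∑ z, A z) + A x * ((n:ℝ) * n - ∑ y, ∑ z, B y z) := by
    intro x
    rw [Finset.sum_congr rfl fun y _ => h1 x y, Finset.sum_add_distrib, ← Finset.mul_sum,
      ← Finset.sum_mul, Finset.sum_sub_distrib]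
    simp
  rw [Finset.sum_congr rfl fun x _ => h2 x, Finset.sum_add_distrib,
    ← Finset.sum_mul Finset.univ A, Finset.sum_const, Finset.card_univ, Fintype.card_fin, nsmul_eq_mul]
  ring

lemma sum_maj {n k : ℕ} (a : Fin n → Fin k) (h : Fin k) :
    ∑ x : Fin n × Fin n × Fin n, (if maj3 (a x.1) (a x.2.1) (a x.2.2) = h then (1:ℝ) else 0)
      = (cnt a h : ℝ) ^ 2 * n + cnt a h * ((n:ℝ) ^ 2 - ∑ g, (cnt a g : ℝ) ^ 2) := by
  simp_rw [ind_maj, Fintype.sum_prod_type]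
  have hQ : ∑ y, ∑ z, ∑ g, (if a y = g then (1:ℝ) else 0) * (if a z = g then 1 else 0)
      = ∑ g, (cnt a g : ℝ) ^ 2 := by
    have : ∀ y, ∑ z, ∑ g, (if a y = g then (1:ℝ) else 0) * (if a z = g then 1 else 0)
        = ∑ g, (if a y = g then (1:ℝ) else 0) * cnt a g := by
      intro y
      rw [Finset.sum_comm]
      refine Finset.sum_congr rfl fun g _ => ?_
      rw [← Finset.mul_sum, sum_ind]
    rw [Finset.sum_congr rfl fun y _ => this y, Finset.sum_comm]
    refine Finset.sum_congr rfl fun g _ => ?_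
    rw [← Finset.sum_mul, sum_ind]; ring
  have := sum_gen (fun i => if a i = h then (1:ℝ) else 0)
    (fun y z => ∑ g, (if a y = g then (1:ℝ) else 0) * (if a z = g then 1 else 0))
  rw [hQ, sum_ind] at this
  exact this

lemma sum_mgf {n k : ℕ} (a : Fin n → Fin k) (m j : Fin k) (hj : j ≠ m) (θ : ℝ) :
    ∑ x : Fin n × Fin n × Fin n,
      Real.exp (-θ * ((if maj3 (a x.1) (a x.2.1) (a x.2.2) = m then (1:ℝ) else 0)
        - (if maj3 (a x.1) (a x.2.1) (a x.2.2) = j then (1:ℝ) else 0)))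
      = (n:ℝ) ^ 3
        + ((cnt a m : ℝ) ^ 2 * n + cnt a m * ((n:ℝ) ^ 2 - ∑ g, (cnt a g : ℝ) ^ 2)) * (Real.exp (-θ) - 1)
        + ((cnt a j : ℝ) ^ 2 * n + cnt a j * ((n:ℝ) ^ 2 - ∑ g, (cnt a g : ℝ) ^ 2)) * (Real.exp θ - 1) := by
  have key : ∀ x : Fin n × Fin n × Fin n,
      Real.exp (-θ * ((if maj3 (a x.1) (a x.2.1) (a x.2.2) = m then (1:ℝ) else 0)
        - (if maj3 (a x.1) (a x.2.1) (a x.2.2) = j then (1:ℝ) else 0)))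
      = 1 + (if maj3 (a x.1) (a x.2.1) (a x.2.2) = m then (1:ℝ) else 0) * (Real.exp (-θ) - 1)
        + (if maj3 (a x.1) (a x.2.1) (a x.2.2) = j then (1:ℝ) else 0) * (Real.exp θ - 1) := by
    intro x
    by_cases h1 : maj3 (a x.1) (a x.2.1) (a x.2.2) = m
    · simp [h1, Ne.symm hj]
    · by_cases h2 : maj3 (a x.1) (a x.2.1) (a x.2.2) = j
      · simp [h2, hj]
      · simp [h1, h2]
  simp_rw [key, Finset.sum_add_distrib, ← Finset.sum_mul, sum_maj]
  simp
  ring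

lemma markov {n k : ℕ} (hn : 0 < n) (a : Fin n → Fin k) (m j : Fin k) (θ T : ℝ) (hθ : 0 ≤ θ) :
    stepPr a (fun b => (cnt b m : ℝ) - (cnt b j : ℝ) ≤ T) ≤
      Real.exp (θ * T) * ((∑ x : Fin n × Fin n × Fin n,
      Real.exp (-θ * ((if maj3 (a x.1) (a x.2.1) (a x.2.2) = m then (1:ℝ) else 0)
        - (if maj3 (a x.1) (a x.2.1) (a x.2.2) = j then (1:ℝ) else 0)))) / (n:ℝ) ^ 3) ^ n := by
  classical
  have hpow : ∀ F : Fin n × Fin n × Fin n → ℝ, (∑ x, F x) ^ n = ∑ S : Sample n, ∏ i, F (S i) := by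
    intro F
    have := Finset.prod_univ_sum (fun _ : Fin n => (Finset.univ : Finset (Fin n × Fin n × Fin n)))
      (fun _ x => F x)
    simpa using this
  have hcard : (Nat.card (Sample n) : ℝ) = ((n:ℝ) ^ 3) ^ n := by
    simp [Sample]; ring
  rw [stepPr, hcard, div_pow, ← mul_div_assoc]
  have : (0:ℝ) < n := by exact_mod_cast hn
  refine div_le_div_of_nonneg_right ?_ (by positivity)
  rw [hpow, Finset.mul_sum, Nat.card_eq_fintype_card, Fintype.card_subtype, Finset.card_filter]
  push_cast
  refine Finset.sum_le_sum fun S _ => ?_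
  rw [← Real.exp_sum, ← Real.exp_add, ← Finset.mul_sum, Finset.sum_sub_distrib]
  have e : ∀ h, ∑ i, (if maj3 (a (S i).1) (a (S i).2.1) (a (S i).2.2) = h then (1:ℝ) else 0)
      = cnt (stepA a S) h := fun h => by rw [← sum_ind]; rfl
  rw [e, e]
  split_ifs with h
  · apply Real.one_le_exp
    nlinarith
  · positivity

/-- Lemma (large majority and large bias), first bound: if `M(c̄) = {m}`, `0 < λ ≤ 2/3`,
`λ·n ≤ c_m ≤ (2/3)·n` and `s(c̄) ≥ 22·√((1/λ)·n·log n)`, then for every `j ≠ m`,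
`Pr[C_{m,t+1} − C_{j,t+1} ≤ s(c̄)·(1 + λ/6) | C_t = c̄] ≤ 1/n²`. -/
theorem large_bias_gap_prob (n k : ℕ) (c : Fin k → ℕ) (hc : ∑ h, c h = n)
    (a : Fin n → Fin k) (ha : ∀ h, cnt a h = c h) (m : Fin k) (hM : Mset c = {m})
    (lam : ℝ) (hlam0 : 0 < lam) (hlam1 : lam ≤ 2 / 3)
    (hcm1 : lam * (n : ℝ) ≤ (c m : ℝ)) (hcm2 : (c m : ℝ) ≤ 2 / 3 * (n : ℝ))
    (hs : (sval c : ℝ) ≥ 22 * Real.sqrt ((1 / lam) * (n : ℝ) * Real.log n)) :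
    ∀ j : Fin k, j ≠ m →
      stepPr a (fun b =>
          (cnt b m : ℝ) - (cnt b j : ℝ) ≤ (sval c : ℝ) * (1 + lam / 6)) ≤ 1 / (n : ℝ) ^ 2 := by
  intro j hj
  have hmv : mval c = c m := by
    have : m ∈ Mset c := by rw [hM]; simp
    simpa [Mset, eq_comm] using this
  have hsv : sval c = c m - (Finset.univ \ {m}).sup c := by
    simp [sval, hM, hmv]
  have hle : ∀ h, c h ≤ c m := fun h => by
    rw [← hmv]; exact Finset.le_sup (f := c) (Finset.mem_univ h)
  have hlt : c j < c m := by
    refine lt_of_le_of_ne (hle j) fun h => hj ?_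
    have : j ∈ Mset c := by simp [Mset, hmv, h]
    simpa [hM] using this
  have hgap : ∀ h, h ≠ m → c h + sval c ≤ c m := by
    intro h hh
    have h1 : c h ≤ (Finset.univ \ {m}).sup c := Finset.le_sup (f := c) (by simpa using hh)
    have h2 : (Finset.univ \ {m}).sup c ≤ c m := Finset.sup_le fun g _ => hle g
    omega
  have hmn : c m ≤ n := by
    rw [← hc]; exact Finset.single_le_sum (fun _ _ => Nat.zero_le _) (Finset.mem_univ m)
  have hn : 0 < n := by omega
  have hN : (0:ℝ) < n := by exact_mod_cast hn
  have hN1 : (1:ℝ) ≤ n := by exact_mod_cast hn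
  have hcR : ∑ h, (c h : ℝ) = n := by exact_mod_cast hc
  have hQ2 : (c m : ℝ) ^ 2 ≤ ∑ g, (c g : ℝ) ^ 2 :=
    Finset.single_le_sum (f := fun g => (c g : ℝ) ^ 2) (fun _ _ => sq_nonneg _) (Finset.mem_univ m)
  have hQ1 : ∑ g, (c g : ℝ) ^ 2 ≤ (c m : ℝ) ^ 2 + (n - c m) * (c m - sval c) := by
    have h1 := Finset.add_sum_erase Finset.univ (fun g => (c g : ℝ) ^ 2) (Finset.mem_univ m)
    have h2 := Finset.add_sum_erase Finset.univ (fun g => (c g : ℝ)) (Finset.mem_univ m)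
    have h3 : ∑ g ∈ Finset.univ.erase m, (c g : ℝ) ^ 2
        ≤ ∑ g ∈ Finset.univ.erase m, (c g : ℝ) * (c m - sval c) := by
      refine Finset.sum_le_sum fun g hg => ?_
      have h4 : (c g : ℝ) + sval c ≤ c m := by exact_mod_cast hgap g (Finset.ne_of_mem_erase hg)
      rw [sq]
      exact mul_le_mul_of_nonneg_left (by linarith) (Nat.cast_nonneg _)
    rw [← Finset.sum_mul] at h3
    have h5 : ∑ g ∈ Finset.univ.erase m, (c g : ℝ) = n - c m := by linarith
    rw [h5] at h3
    linarith
  have hgj : (c j : ℝ) + sval c ≤ c m := by exact_mod_cast hgap j hj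
  set s : ℝ := (sval c : ℝ) with hsdef
  have hs0 : 0 ≤ s := Nat.cast_nonneg _
  set Q : ℝ := ∑ g, (c g : ℝ) ^ 2 with hQdef
  have hs2 : 484 * (1 / lam * n * Real.log n) ≤ s ^ 2 := by
    have hnn : 0 ≤ 1 / lam * n * Real.log n :=
      mul_nonneg (by positivity) (Real.log_nonneg hN1)
    have h1 := Real.sq_sqrt hnn
    have h2 := Real.sqrt_nonneg (1 / lam * n * Real.log n)
    nlinarith
  have hex := expo_bd (N := n) (p := c m / n) (q := c j / n) (S := Q / n ^ 2) (σ := s / n)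
    (lam := lam) hN1 (by positivity) (by positivity)
    (by rw [← sub_div]; exact div_le_div_of_nonneg_right (by linarith) hN.le)
    (by rw [div_le_iff₀ hN]; linarith)
    (by
      have : ((c m : ℝ) / n) ^ 2 + (1 - c m / n) * (c m / n - s / n)
        = ((c m : ℝ) ^ 2 + (n - c m) * (c m - s)) / n ^ 2 := by field_simp
      rw [this]
      exact div_le_div_of_nonneg_right hQ1 (by positivity))
    (by rw [div_pow]; exact div_le_div_of_nonneg_right hQ2 (by positivity))
    hlam0 (by rw [le_div_iff₀ hN]; linarith)
    (by rw [div_mul_cancel₀ _ hN.ne']; exact hs2)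
  rw [div_mul_cancel₀ _ hN.ne'] at hex
  refine (markov hn a m j (s / n / 18) _ (by positivity)).trans ?_
  rw [sum_mgf a m j hj]
  simp only [ha]
  rw [← hQdef]
  set θ := s / n / 18
  set w := (c m : ℝ) / n * (1 + c m / n - Q / n ^ 2) * (Real.exp (-θ) - 1)
    + (c j : ℝ) / n * (1 + c j / n - Q / n ^ 2) * (Real.exp θ - 1) with hw
  have e1 : ((n:ℝ) ^ 3 + ((c m : ℝ) ^ 2 * n + c m * ((n:ℝ) ^ 2 - Q)) * (Real.exp (-θ) - 1)
      + ((c j : ℝ) ^ 2 * n + c j * ((n:ℝ) ^ 2 - Q)) * (Real.exp θ - 1)) / (n:ℝ) ^ 3 = 1 + w := by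
    rw [hw]; generalize Real.exp (-θ) = A; generalize Real.exp θ = B
    field_simp
    ring
  have hpos : 0 ≤ 1 + w := by
    rw [← e1]
    have := sum_mgf a m j hj θ
    simp only [ha] at this
    rw [← hQdef] at this
    rw [← this]
    positivity
  rw [e1]
  have h1 : (1 + w) ^ n ≤ Real.exp (n * w) := by
    rw [Real.exp_nat_mul]
    exact pow_le_pow_left₀ hpos (by linarith [Real.add_one_le_exp w]) n
  calc Real.exp (θ * (s * (1 + lam / 6))) * (1 + w) ^ n
      ≤ Real.exp (θ * (s * (1 + lam / 6))) * Real.exp (n * w) := by gcongr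
    _ = Real.exp (n * w + θ * (s * (1 + lam / 6))) := by rw [← Real.exp_add, add_comm]
    _ ≤ Real.exp (-2 * Real.log n) := Real.exp_le_exp.2 hex
    _ = 1 / (n:ℝ) ^ 2 := by
      rw [show -2 * Real.log n = -(Real.log ((n:ℝ) ^ 2)) by rw [Real.log_pow]; push_cast; ring,
        Real.exp_neg, Real.exp_log (by positivity), one_div]
end
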